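/- Let x ∈ 𝕊², let p ∈ ℝ³ satisfy ⟨p, x⟩ = 0, and let ν ∈ ℝ³ be a unit vector with ⟨ν, x⟩ = 0. Then the function φ(t) = −2 log‖x + tν − T(x,p)‖ is twice differentiable at t = 0 and φ''(0) = ⟨ν, p⟩² − (‖p‖² + 1)/2. (This is the explicit formula for the second directional derivative −2 ∂²/∂ν² log‖x − y‖ evaluated at y = T(x,p), which appears in the term A(x,p) = D²ₓₓc(x, T(x,p)) of the Monge–Ampère equation.) -/

import Mathlib

open scoped RealInnerProductSpace

/-!
Along a line `z + t • ν` the first derivative of `log ‖z + t • ν‖` is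
`⟪z + t • ν, ν⟫ / ‖z + t • ν‖²`, and the quotient rule gives the second one. At `t = 0` with
`z = x - T(x, p)` everything is explicit: `z` is the multiple `2 / (‖p‖² + 1)` of `p + x`, and
`‖p + x‖² = ‖p‖² + 1` by Pythagoras.
-/

section NormedSpace

variable {E : Type*} [NormedAddCommGroup E] [NormedSpace ℝ E]

/-- The optical map `T(x, p)`, given by its formula for all `x` and `p` of a real normed space. In
an inner product space it takes values in the unit sphere when `‖x‖ = 1` and `⟪p, x⟫ = 0`. -/
noncomputable def opticalMap (x p : E) : E :=
  (‖p‖ ^ 2 + 1)⁻¹ • ((-2 : ℝ) • p + (‖p‖ ^ 2 - 1) • x)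

/-- The transport cost `c(x, y) = -2 log ‖x - y‖`, for points that need not lie on the unit sphere,
so that it can be differentiated along straight lines. On the diagonal, where the cost is
mathematically infinite, it is `0` because `Real.log 0 = 0`. -/
noncomputable def transportCost (x y : E) : ℝ :=
  -2 * Real.log ‖x - y‖

lemma sub_opticalMap (x p : E) : x - opticalMap x p = (2 / (‖p‖ ^ 2 + 1)) • (p + x) := by
  have hp : ‖p‖ ^ 2 + 1 ≠ 0 := by positivity
  unfold opticalMap
  match_scalars <;> field_simp
  ring

lemma transportCost_add_smul (x y ν : E) :
    (fun t : ℝ => transportCost (x + t • ν) y) = fun t => -2 * Real.log ‖x - y + t • ν‖ := by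
  simp only [transportCost, add_sub_right_comm]

lemma hasDerivAt_add_smul (z ν : E) (t : ℝ) : HasDerivAt (fun s : ℝ => z + s • ν) ν t := by
  simpa using ((hasDerivAt_id t).smul_const ν).const_add z

end NormedSpace

section InnerProductSpace

variable {E : Type*} [NormedAddCommGroup E] [InnerProductSpace ℝ E]

lemma hasDerivAt_log_norm {f : ℝ → E} {f' : E} {t : ℝ} (hf : HasDerivAt f f' t) (hft : f t ≠ 0) :
    HasDerivAt (fun s => Real.log ‖f s‖) (⟪f t, f'⟫ / ‖f t‖ ^ 2) t := by
  have hlog : (fun s => Real.log ‖f s‖) = fun s => Real.log (‖f s‖ ^ 2) / 2 := by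
    funext s
    simp [Real.log_pow]
  have hsq : ‖f t‖ ^ 2 ≠ 0 := by simpa using hft
  rw [hlog]
  exact ((hf.norm_sq.log hsq).div_const 2).congr_deriv (by ring)

lemma hasDerivAt_deriv_log_norm_add_smul {z ν : E} {t : ℝ} (ht : z + t • ν ≠ 0) :
    HasDerivAt (deriv fun s : ℝ => Real.log ‖z + s • ν‖)
      (‖ν‖ ^ 2 / ‖z + t • ν‖ ^ 2 - 2 * ⟪z + t • ν, ν⟫ ^ 2 / ‖z + t • ν‖ ^ 4) t := by
  have hline := hasDerivAt_add_smul z ν t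
  have hderiv : (deriv fun s : ℝ => Real.log ‖z + s • ν‖) =ᶠ[nhds t]
      fun s => ⟪z + s • ν, ν⟫ / ‖z + s • ν‖ ^ 2 := by
    filter_upwards [hline.continuousAt.eventually_ne ht] with s hs
    exact (hasDerivAt_log_norm (hasDerivAt_add_smul z ν s) hs).deriv
  have hinner : HasDerivAt (fun s : ℝ => ⟪z + s • ν, ν⟫) (‖ν‖ ^ 2) t := by
    simpa using hline.inner ℝ (hasDerivAt_const t ν)
  have hnorm : ‖z + t • ν‖ ≠ 0 := norm_ne_zero_iff.mpr ht
  refine ((hinner.div hline.norm_sq (pow_ne_zero 2 hnorm)).congr_deriv ?_).congr_of_eventuallyEq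
    hderiv
  field_simp

lemma norm_sub_opticalMap_sq {x p : E} (hx : ‖x‖ = 1) (hp : ⟪p, x⟫ = 0) :
    ‖x - opticalMap x p‖ ^ 2 = 4 / (‖p‖ ^ 2 + 1) := by
  have hpx : ‖p + x‖ ^ 2 = ‖p‖ ^ 2 + 1 := by
    rw [norm_add_sq_real, hp, hx]
    ring
  rw [sub_opticalMap, norm_smul, mul_pow, hpx, Real.norm_eq_abs, sq_abs]
  field_simp
  norm_num

lemma differentiableAt_transportCost_add_smul {x y : E} (hxy : x ≠ y) (ν : E) :
    DifferentiableAt ℝ (fun t : ℝ => transportCost (x + t • ν) y) 0 := by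
  rw [transportCost_add_smul]
  have hne : x - y + (0 : ℝ) • ν ≠ 0 := by simpa [sub_eq_zero] using hxy
  exact ((hasDerivAt_log_norm (hasDerivAt_add_smul (x - y) ν 0) hne).const_mul
    (-2)).differentiableAt

lemma hasDerivAt_deriv_transportCost_add_smul {x y : E} (hxy : x ≠ y) (ν : E) :
    HasDerivAt (deriv fun t : ℝ => transportCost (x + t • ν) y)
      (4 * ⟪x - y, ν⟫ ^ 2 / ‖x - y‖ ^ 4 - 2 * ‖ν‖ ^ 2 / ‖x - y‖ ^ 2) 0 := by
  have hne : x - y + (0 : ℝ) • ν ≠ 0 := by simpa [sub_eq_zero] using hxy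
  rw [transportCost_add_smul, deriv_const_mul_field']
  refine ((hasDerivAt_deriv_log_norm_add_smul hne).const_mul (-2)).congr_deriv ?_
  rw [zero_smul, add_zero]
  ring

theorem cost_second_directional_derivative_general {x p : E} (hx : ‖x‖ = 1) (hp : ⟪p, x⟫ = 0)
    (ν : E) :
    DifferentiableAt ℝ (fun t : ℝ => transportCost (x + t • ν) (opticalMap x p)) 0 ∧
      DifferentiableAt ℝ (deriv fun t : ℝ => transportCost (x + t • ν) (opticalMap x p)) 0 ∧
      deriv (deriv fun t : ℝ => transportCost (x + t • ν) (opticalMap x p)) 0 =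
        ⟪ν, p + x⟫ ^ 2 - ‖ν‖ ^ 2 * (‖p‖ ^ 2 + 1) / 2 := by
  have hsq := norm_sub_opticalMap_sq hx hp
  have hne : x ≠ opticalMap x p := by
    rw [← sub_ne_zero, ← norm_ne_zero_iff, ← pow_ne_zero_iff two_ne_zero, hsq]
    positivity
  have hsecond := hasDerivAt_deriv_transportCost_add_smul hne ν
  refine ⟨differentiableAt_transportCost_add_smul hne ν, hsecond.differentiableAt, ?_⟩
  have hinner : ⟪x - opticalMap x p, ν⟫ = 2 / (‖p‖ ^ 2 + 1) * ⟪ν, p + x⟫ := by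
    rw [sub_opticalMap, real_inner_smul_left, real_inner_comm]
  have hfour : ‖x - opticalMap x p‖ ^ 4 = (4 / (‖p‖ ^ 2 + 1)) ^ 2 := by
    rw [← hsq]
    ring
  rw [hsecond.deriv, hinner, hfour, hsq]
  field_simp
  ring

end InnerProductSpace

/-- For `x ∈ 𝕊²`, a tangential `p` and a unit tangent direction `ν`, the
function `φ(t) = −2 log‖x + tν − T(x,p)‖` is twice differentiable at `t = 0` with
`φ''(0) = ⟨ν,p⟩² − (‖p‖² + 1)/2` (the second directional derivative of the cost,
appearing in `A(x,p) = D²ₓₓc(x, T(x,p))`). -/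
theorem cost_second_directional_derivative
    (x p ν : EuclideanSpace ℝ (Fin 3)) (hx : ‖x‖ = 1) (hp : ⟪p, x⟫ = 0)
    (hν : ‖ν‖ = 1) (hνx : ⟪ν, x⟫ = 0)
    (y : EuclideanSpace ℝ (Fin 3))
    (hy : y = (‖p‖ ^ 2 + 1)⁻¹ • ((-2 : ℝ) • p + (‖p‖ ^ 2 - 1) • x))
    (φ : ℝ → ℝ) (hφ : φ = fun t : ℝ => -2 * Real.log ‖x + t • ν - y‖) :
    DifferentiableAt ℝ φ 0 ∧ DifferentiableAt ℝ (deriv φ) 0 ∧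
      deriv (deriv φ) 0 = ⟪ν, p⟫ ^ 2 - (‖p‖ ^ 2 + 1) / 2 := by
  subst hφ hy
  simpa only [transportCost, opticalMap, inner_add_right, hνx, add_zero, hν, one_pow, one_mul]
    using cost_second_directional_derivative_general hx hp ν
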